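/- arXiv:1512.08712 — 7 statements merged into one kernel-verified Lean document; each statement's English description precedes it below -/
import Mathlib

section
/- Let R be an invertible n²×n² matrix over k satisfying the quantum Yang–Baxter equation, and suppose R^{t₂} is invertible. Then: (i) (Rᵗ)₁₂(Rᵗ)₁₃(Rᵗ)₂₃ = (Rᵗ)₂₃(Rᵗ)₁₃(Rᵗ)₁₂, i.e. Rᵗ also satisfies the quantum Yang–Baxter equation; (ii) R₁₂·((R^{t₂})⁻¹)₁₃·((R^{t₂})⁻¹)₂₃ = ((R^{t₂})⁻¹)₂₃·((R^{t₂})⁻¹)₁₃·R₁₂; (iii) (R^{t₂})₁₃·(R^{t₂})₂₃·R₁₂ = R₁₂·(R^{t₂})₂₃·(R^{t₂})₁₃. -/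
open Matrix

/-- Partial transpose in the first factor: `(M^{t₁})^{(i,j)}_{(k,l)} = M^{(k,j)}_{(i,l)}`. -/
def pt1 {α : Type*} {n : ℕ} (M : Matrix (Fin n × Fin n) (Fin n × Fin n) α) :
    Matrix (Fin n × Fin n) (Fin n × Fin n) α :=
  Matrix.of fun p q => M (q.1, p.2) (p.1, q.2)

/-- Partial transpose in the second factor: `(M^{t₂})^{(i,j)}_{(k,l)} = M^{(i,l)}_{(k,j)}`. -/
def pt2 {α : Type*} {n : ℕ} (M : Matrix (Fin n × Fin n) (Fin n × Fin n) α) :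
    Matrix (Fin n × Fin n) (Fin n × Fin n) α :=
  Matrix.of fun p q => M (p.1, q.2) (q.1, p.2)

/-- `M₁₂` acting on triples: `(M₁₂)^{(i,j,m)}_{(k,l,p)} = M^{(i,j)}_{(k,l)} δ_{mp}`. -/
def L12 {α : Type*} [Semiring α] {n : ℕ} (M : Matrix (Fin n × Fin n) (Fin n × Fin n) α) :
    Matrix (Fin n × Fin n × Fin n) (Fin n × Fin n × Fin n) α :=
  Matrix.of fun a b => if a.2.2 = b.2.2 then M (a.1, a.2.1) (b.1, b.2.1) else 0

/-- `M₂₃` acting on triples: `(M₂₃)^{(m,i,j)}_{(p,k,l)} = δ_{mp} M^{(i,j)}_{(k,l)}`. -/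
def L23 {α : Type*} [Semiring α] {n : ℕ} (M : Matrix (Fin n × Fin n) (Fin n × Fin n) α) :
    Matrix (Fin n × Fin n × Fin n) (Fin n × Fin n × Fin n) α :=
  Matrix.of fun a b => if a.1 = b.1 then M (a.2.1, a.2.2) (b.2.1, b.2.2) else 0

/-- `M₁₃` acting on triples: `(M₁₃)^{(i,m,j)}_{(k,p,l)} = δ_{mp} M^{(i,j)}_{(k,l)}`. -/
def L13 {α : Type*} [Semiring α] {n : ℕ} (M : Matrix (Fin n × Fin n) (Fin n × Fin n) α) :
    Matrix (Fin n × Fin n × Fin n) (Fin n × Fin n × Fin n) α :=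
  Matrix.of fun a b => if a.2.1 = b.2.1 then M (a.1, a.2.2) (b.1, b.2.2) else 0

/-!
Transposing the Yang–Baxter equation reverses every product, which gives (i). Transposing it only in
the third factor commutes with multiplication by `R₁₂` and exchanges the two factors of `R₁₃R₂₃`
and of `R₂₃R₁₃` while replacing `R` by `R^{t₂}`, which gives (iii). Equation (iii) says that `R₁₂`
semiconjugates `(R^{t₂})₂₃(R^{t₂})₁₃` to `(R^{t₂})₁₃(R^{t₂})₂₃`, so it also semiconjugates the
inverses of these products, which gives (ii).
-/

/-- Partial transpose in the third factor:
`(X^{t₃})^{(i,j,m)}_{(k,l,p)} = X^{(i,j,p)}_{(k,l,m)}`. It carries the Yang–Baxter equation for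
`R` to a relation between `R₁₂` and `R^{t₂}`. -/
def pt3 {α : Type*} {n : ℕ} (X : Matrix (Fin n × Fin n × Fin n) (Fin n × Fin n × Fin n) α) :
    Matrix (Fin n × Fin n × Fin n) (Fin n × Fin n × Fin n) α :=
  Matrix.of fun a b => X (a.1, a.2.1, b.2.2) (b.1, b.2.1, a.2.2)

section Semiring

variable {α : Type*} [Semiring α] {n : ℕ}

theorem L12_transpose (M : Matrix (Fin n × Fin n) (Fin n × Fin n) α) : L12 Mᵀ = (L12 M)ᵀ := by
  ext a b
  simp [L12, eq_comm]

theorem L13_transpose (M : Matrix (Fin n × Fin n) (Fin n × Fin n) α) : L13 Mᵀ = (L13 M)ᵀ := by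
  ext a b
  simp [L13, eq_comm]

theorem L23_transpose (M : Matrix (Fin n × Fin n) (Fin n × Fin n) α) : L23 Mᵀ = (L23 M)ᵀ := by
  ext a b
  simp [L23, eq_comm]

theorem L13_eq_submatrix_blockDiagonal (M : Matrix (Fin n × Fin n) (Fin n × Fin n) α) :
    L13 M =
      (blockDiagonal fun _ : Fin n => M).submatrix
        (((Equiv.refl _).prodCongr (Equiv.prodComm _ _)).trans (Equiv.prodAssoc _ _ _).symm)
        (((Equiv.refl _).prodCongr (Equiv.prodComm _ _)).trans (Equiv.prodAssoc _ _ _).symm) := by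
  ext a b
  simp [L13, blockDiagonal_apply]

theorem L23_eq_submatrix_blockDiagonal (M : Matrix (Fin n × Fin n) (Fin n × Fin n) α) :
    L23 M =
      (blockDiagonal fun _ : Fin n => M).submatrix (Equiv.prodComm _ _) (Equiv.prodComm _ _) := by
  ext a b
  simp [L23, blockDiagonal_apply]

/-- The embedding `M ↦ M₁₃` as a monoid homomorphism, through which units of the matrix ring are
transported to the first and third factors. -/
def L13Hom : Matrix (Fin n × Fin n) (Fin n × Fin n) α →*
    Matrix (Fin n × Fin n × Fin n) (Fin n × Fin n × Fin n) α where
  toFun := L13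
  map_one' := by
    rw [L13_eq_submatrix_blockDiagonal]
    exact (congrArg (submatrix · _ _) blockDiagonal_one).trans (submatrix_one_equiv _)
  map_mul' A B := by
    simp only [L13_eq_submatrix_blockDiagonal, submatrix_mul_equiv, blockDiagonal_mul]

/-- The embedding `M ↦ M₂₃` as a monoid homomorphism, through which units of the matrix ring are
transported to the second and third factors. -/
def L23Hom : Matrix (Fin n × Fin n) (Fin n × Fin n) α →*
    Matrix (Fin n × Fin n × Fin n) (Fin n × Fin n × Fin n) α where
  toFun := L23
  map_one' := by
    rw [L23_eq_submatrix_blockDiagonal]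
    exact (congrArg (submatrix · _ _) blockDiagonal_one).trans (submatrix_one_equiv _)
  map_mul' A B := by
    simp only [L23_eq_submatrix_blockDiagonal, submatrix_mul_equiv, blockDiagonal_mul]

theorem mul_L13_inv_mul_L23_inv (T U : (Matrix (Fin n × Fin n) (Fin n × Fin n) α)ˣ)
    {X : Matrix (Fin n × Fin n × Fin n) (Fin n × Fin n × Fin n) α}
    (h : L13 ↑T * L23 ↑U * X = X * L23 ↑U * L13 ↑T) :
    X * L13 ↑T⁻¹ * L23 ↑U⁻¹ = L23 ↑U⁻¹ * L13 ↑T⁻¹ * X := by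
  have intertwines : SemiconjBy X ↑(Units.map L23Hom U * Units.map L13Hom T)
      ↑(Units.map L13Hom T * Units.map L23Hom U) :=
    (Matrix.mul_assoc _ _ _).symm.trans h.symm
  have intertwines_inv := intertwines.units_inv_right
  rw [_root_.mul_inv_rev, _root_.mul_inv_rev] at intertwines_inv
  exact (Matrix.mul_assoc _ _ _).trans intertwines_inv

theorem pt3_L12_mul (M : Matrix (Fin n × Fin n) (Fin n × Fin n) α)
    (X : Matrix (Fin n × Fin n × Fin n) (Fin n × Fin n × Fin n) α) :
    pt3 (L12 M * X) = L12 M * pt3 X := by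
  ext ⟨i, j, m⟩ ⟨i', j', m'⟩
  simp [pt3, L12, Matrix.mul_apply, Fintype.sum_prod_type]

theorem pt3_mul_L12 (M : Matrix (Fin n × Fin n) (Fin n × Fin n) α)
    (X : Matrix (Fin n × Fin n × Fin n) (Fin n × Fin n × Fin n) α) :
    pt3 (X * L12 M) = pt3 X * L12 M := by
  ext ⟨i, j, m⟩ ⟨i', j', m'⟩
  simp [pt3, L12, Matrix.mul_apply, Fintype.sum_prod_type]

end Semiring

section CommSemiring

variable {k : Type*} [CommSemiring k] {n : ℕ}

theorem pt3_L13_mul_L23 (A B : Matrix (Fin n × Fin n) (Fin n × Fin n) k) :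
    pt3 (L13 A * L23 B) = L23 (pt2 B) * L13 (pt2 A) := by
  ext ⟨i, j, m⟩ ⟨i', j', m'⟩
  simp [pt3, L13, L23, pt2, Matrix.mul_apply, Fintype.sum_prod_type, Finset.sum_ite_irrel, mul_comm]

theorem pt3_L23_mul_L13 (A B : Matrix (Fin n × Fin n) (Fin n × Fin n) k) :
    pt3 (L23 A * L13 B) = L13 (pt2 B) * L23 (pt2 A) := by
  ext ⟨i, j, m⟩ ⟨i', j', m'⟩
  simp [pt3, L13, L23, pt2, Matrix.mul_apply, Fintype.sum_prod_type, Finset.sum_ite_irrel, mul_comm]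

theorem yangBaxter_transpose {A B C : Matrix (Fin n × Fin n) (Fin n × Fin n) k}
    (h : L12 A * L13 B * L23 C = L23 C * L13 B * L12 A) :
    L12 Aᵀ * L13 Bᵀ * L23 Cᵀ = L23 Cᵀ * L13 Bᵀ * L12 Aᵀ := by
  simpa only [L12_transpose, L13_transpose, L23_transpose, transpose_mul, Matrix.mul_assoc]
    using congrArg transpose h.symm

theorem yangBaxter_pt2 {A B C : Matrix (Fin n × Fin n) (Fin n × Fin n) k}
    (h : L12 A * L13 B * L23 C = L23 C * L13 B * L12 A) :
    L13 (pt2 B) * L23 (pt2 C) * L12 A = L12 A * L23 (pt2 C) * L13 (pt2 B) :=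
  calc L13 (pt2 B) * L23 (pt2 C) * L12 A
    _ = pt3 (L23 C * L13 B * L12 A) := by rw [pt3_mul_L12, pt3_L23_mul_L13]
    _ = pt3 (L12 A * (L13 B * L23 C)) := by rw [← h, Matrix.mul_assoc]
    _ = L12 A * L23 (pt2 C) * L13 (pt2 B) := by
      rw [pt3_L12_mul, pt3_L13_mul_L23, Matrix.mul_assoc]

theorem stmt1_general (R : Matrix (Fin n × Fin n) (Fin n × Fin n) k)
    (hQYBE : L12 R * L13 R * L23 R = L23 R * L13 R * L12 R) :
    (L12 Rᵀ * L13 Rᵀ * L23 Rᵀ = L23 Rᵀ * L13 Rᵀ * L12 Rᵀ) ∧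
    (∀ T : (Matrix (Fin n × Fin n) (Fin n × Fin n) k)ˣ, ↑T = pt2 R →
      L12 R * L13 ↑T⁻¹ * L23 ↑T⁻¹ = L23 ↑T⁻¹ * L13 ↑T⁻¹ * L12 R) ∧
    (L13 (pt2 R) * L23 (pt2 R) * L12 R = L12 R * L23 (pt2 R) * L13 (pt2 R)) := by
  refine ⟨yangBaxter_transpose hQYBE, fun T hT => ?_, yangBaxter_pt2 hQYBE⟩
  apply mul_L13_inv_mul_L23_inv
  rw [hT]
  exact yangBaxter_pt2 hQYBE

end CommSemiring

/-- if `R` is an invertible solution of the QYBE with `R^{t₂}` invertible, then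
(i) `Rᵗ` satisfies the QYBE; (ii) `R₁₂((R^{t₂})⁻¹)₁₃((R^{t₂})⁻¹)₂₃ = ((R^{t₂})⁻¹)₂₃((R^{t₂})⁻¹)₁₃R₁₂`;
(iii) `(R^{t₂})₁₃(R^{t₂})₂₃R₁₂ = R₁₂(R^{t₂})₂₃(R^{t₂})₁₃`. -/
theorem stmt1 {k : Type*} [CommRing k] {n : ℕ} (hn : 0 < n)
    (R : Matrix (Fin n × Fin n) (Fin n × Fin n) k)
    (hR : IsUnit R)
    (hQYBE : L12 R * L13 R * L23 R = L23 R * L13 R * L12 R)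
    (ht2 : IsUnit (pt2 R)) :
    (L12 Rᵀ * L13 Rᵀ * L23 Rᵀ = L23 Rᵀ * L13 Rᵀ * L12 Rᵀ) ∧
    (L12 R * L13 (pt2 R)⁻¹ * L23 (pt2 R)⁻¹ = L23 (pt2 R)⁻¹ * L13 (pt2 R)⁻¹ * L12 R) ∧
    (L13 (pt2 R) * L23 (pt2 R) * L12 R = L12 R * L23 (pt2 R) * L13 (pt2 R)) := by
  obtain ⟨transposed, inverted, partially_transposed⟩ := stmt1_general R hQYBE
  refine ⟨transposed, ?_, partially_transposed⟩
  simpa only [coe_units_inv, IsUnit.unit_spec] using inverted ht2.unit ht2.unit_spec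
end

section
/- Let R be an invertible n²×n² matrix over k satisfying the quantum Yang–Baxter equation, and suppose R^{t₂} and (R⁻¹)^{t₁} are invertible. Then: (i) (Rᵗ)₂₃·((R^{t₂})⁻¹)₁₃·((R^{t₂})⁻¹)₁₂ = ((R^{t₂})⁻¹)₁₂·((R^{t₂})⁻¹)₁₃·(Rᵗ)₂₃; (ii) (Rᵗ)₁₂·(((R⁻¹)^{t₁})⁻¹)₂₃·(((R⁻¹)^{t₁})⁻¹)₁₃ = (((R⁻¹)^{t₁})⁻¹)₁₃·(((R⁻¹)^{t₁})⁻¹)₂₃·(Rᵗ)₁₂. -/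
open Matrix

/-!
Transposing a product in slots 2 and 3 moves a matrix acting only there from one end to the other
and transposes it, while `R₁₂ R₁₃` becomes `(R^{t₂})₁₂ (R^{t₂})₁₃`, since its two factors share only
slot 1. The QYBE thus becomes `(Rᵗ)₂₃ (R^{t₂})₁₂ (R^{t₂})₁₃ = (R^{t₂})₁₃ (R^{t₂})₁₂ (Rᵗ)₂₃`, and
inverting the `R^{t₂}` factors gives (i). If `R` solves the QYBE then so does `P R⁻¹ P`, and (i) for
this matrix, read with the three slots in reverse order, is (ii) multiplied on both sides by the
inverse of `(Rᵗ)₁₂`.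
-/

open scoped Kronecker

section PartialTranspose

variable {l l' m m' m'' α : Type*}

/-- Partial transpose of a block matrix in the second factor of its index types. It agrees with
`pt2` on pairs; on triples it transposes in slots 2 and 3 together. -/
def transposeSnd (X : Matrix (l × m) (l' × m') α) : Matrix (l × m') (l' × m) α :=
  Matrix.of fun p q => X (p.1, q.2) (q.1, p.2)

theorem transposeSnd_mul_one_kronecker [CommSemiring α] [Fintype l] [Fintype l'] [Fintype m']
    [DecidableEq l] [DecidableEq l'] (X : Matrix (l × m) (l' × m') α) (Y : Matrix m' m'' α) :
    transposeSnd (X * ((1 : Matrix l' l' α) ⊗ₖ Y)) =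
      ((1 : Matrix l l α) ⊗ₖ Yᵀ) * transposeSnd X := by
  ext ⟨a, b⟩ ⟨c, d⟩
  simp [transposeSnd, Matrix.mul_apply, Matrix.one_apply, Fintype.sum_prod_type, mul_comm]

theorem transposeSnd_one_kronecker_mul [CommSemiring α] [Fintype l] [Fintype l'] [Fintype m]
    [DecidableEq l] [DecidableEq l'] (X : Matrix (l × m) (l' × m') α) (Y : Matrix m'' m α) :
    transposeSnd (((1 : Matrix l l α) ⊗ₖ Y) * X) =
      transposeSnd X * ((1 : Matrix l' l' α) ⊗ₖ Yᵀ) := by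
  ext ⟨a, b⟩ ⟨c, d⟩
  simp [transposeSnd, Matrix.mul_apply, Matrix.one_apply, Fintype.sum_prod_type, mul_comm]

end PartialTranspose

section Semiring

variable {α : Type*} [Semiring α] {n : ℕ} (A B M : Matrix (Fin n × Fin n) (Fin n × Fin n) α)

theorem L23_eq_one_kronecker : L23 M = (1 : Matrix (Fin n) (Fin n) α) ⊗ₖ M := by
  ext a b
  simp [L23, Matrix.one_apply]

theorem L12_mul_L13_apply (a b c d e f : Fin n) :
    (L12 A * L13 B) (a, b, c) (d, e, f) = ∑ x, A (a, b) (x, e) * B (x, c) (d, f) := by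
  simp [L12, L13, Matrix.mul_apply, Fintype.sum_prod_type]

theorem L13_mul_L12_apply (a b c d e f : Fin n) :
    (L13 B * L12 A) (a, b, c) (d, e, f) = ∑ x, B (a, c) (x, f) * A (x, b) (d, e) := by
  simp [L12, L13, Matrix.mul_apply, Fintype.sum_prod_type]

theorem transposeSnd_L12_mul_L13 :
    transposeSnd (L12 A * L13 B) = L12 (pt2 A) * L13 (pt2 B) := by
  ext ⟨a, b, c⟩ ⟨d, e, f⟩
  simp only [transposeSnd, Matrix.of_apply, L12_mul_L13_apply, pt2]

theorem transposeSnd_L13_mul_L12 :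
    transposeSnd (L13 B * L12 A) = L13 (pt2 B) * L12 (pt2 A) := by
  ext ⟨a, b, c⟩ ⟨d, e, f⟩
  simp only [transposeSnd, Matrix.of_apply, L13_mul_L12_apply, pt2]

end Semiring

section SlotPermutations

variable {α : Type*} {n : ℕ}

/-- Interchange of the two tensor factors, `M ↦ P M P` for the permutation matrix `P`. -/
def swapFactors (M : Matrix (Fin n × Fin n) (Fin n × Fin n) α) :
    Matrix (Fin n × Fin n) (Fin n × Fin n) α :=
  M.submatrix (Equiv.prodComm _ _) (Equiv.prodComm _ _)

theorem pt2_swapFactors (M : Matrix (Fin n × Fin n) (Fin n × Fin n) α) :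
    pt2 (swapFactors M) = swapFactors (pt1 M) := rfl

theorem transpose_swapFactors (M : Matrix (Fin n × Fin n) (Fin n × Fin n) α) :
    (swapFactors M)ᵀ = swapFactors Mᵀ := rfl

/-- The permutation `(a, b, c) ↦ (c, b, a)` of triples, exchanging the roles of `L12` and `L23`. -/
def reverseSlots (ι : Type*) : ι × ι × ι ≃ ι × ι × ι where
  toFun a := (a.2.2, a.2.1, a.1)
  invFun a := (a.2.2, a.2.1, a.1)

/-- The permutation `(a, b, c) ↦ (b, a, c)` of triples, exchanging the roles of `L13` and `L23`. -/
def swapFirstSlots (ι : Type*) : ι × ι × ι ≃ ι × ι × ι where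
  toFun a := (a.2.1, a.1, a.2.2)
  invFun a := (a.2.1, a.1, a.2.2)

variable [Semiring α] (M : Matrix (Fin n × Fin n) (Fin n × Fin n) α)

theorem reindex_reverseSlots_L12 :
    reindexRingEquiv α (reverseSlots (Fin n)) (L12 M) = L23 (swapFactors M) := rfl

theorem reindex_reverseSlots_L13 :
    reindexRingEquiv α (reverseSlots (Fin n)) (L13 M) = L13 (swapFactors M) := by
  ext a b
  simp [reverseSlots, L13, swapFactors]

theorem reindex_reverseSlots_L23 :
    reindexRingEquiv α (reverseSlots (Fin n)) (L23 M) = L12 (swapFactors M) := rfl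

theorem L13_eq_submatrix_L23 :
    L13 M = (L23 M).submatrix (swapFirstSlots (Fin n)) (swapFirstSlots (Fin n)) := rfl

theorem L12_eq_submatrix_L23 :
    L12 M = (L23 (swapFactors M)).submatrix (reverseSlots (Fin n)) (reverseSlots (Fin n)) := rfl

end SlotPermutations

section Inverses

variable {k : Type*} [CommRing k] {n : ℕ} (M : Matrix (Fin n × Fin n) (Fin n × Fin n) k)

theorem inv_swapFactors : (swapFactors M)⁻¹ = swapFactors M⁻¹ :=
  Matrix.inv_submatrix_equiv ..

theorem inv_L23 : (L23 M)⁻¹ = L23 M⁻¹ := by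
  rw [L23_eq_one_kronecker, L23_eq_one_kronecker, Matrix.inv_kronecker, inv_one]

theorem inv_L13 : (L13 M)⁻¹ = L13 M⁻¹ := by
  rw [L13_eq_submatrix_L23, L13_eq_submatrix_L23, Matrix.inv_submatrix_equiv, inv_L23]

theorem inv_L12 : (L12 M)⁻¹ = L12 M⁻¹ := by
  rw [L12_eq_submatrix_L23, L12_eq_submatrix_L23, Matrix.inv_submatrix_equiv, inv_L23,
    inv_swapFactors]

variable {M}

theorem isUnit_swapFactors (hM : IsUnit M) : IsUnit (swapFactors M) :=
  (Matrix.isUnit_submatrix_equiv ..).2 hM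

theorem isUnit_L23 (hM : IsUnit M) : IsUnit (L23 M) := by
  rw [L23_eq_one_kronecker]
  exact Matrix.IsUnit.kronecker isUnit_one hM

theorem isUnit_L13 (hM : IsUnit M) : IsUnit (L13 M) :=
  (Matrix.isUnit_submatrix_equiv (swapFirstSlots _) (swapFirstSlots _)).2 (isUnit_L23 hM)

theorem isUnit_L12 (hM : IsUnit M) : IsUnit (L12 M) :=
  (Matrix.isUnit_submatrix_equiv (reverseSlots _) (reverseSlots _)).2
    (isUnit_L23 (isUnit_swapFactors hM))

end Inverses

section SemiconjBy

variable {ι k : Type*} [Fintype ι] [DecidableEq ι] [CommRing k] {A X Y : Matrix ι ι k}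

theorem semiconjBy_nonsing_inv_right (hX : IsUnit X) (hY : IsUnit Y) (h : SemiconjBy A X Y) :
    SemiconjBy A X⁻¹ Y⁻¹ := by
  lift X to (Matrix ι ι k)ˣ using hX
  lift Y to (Matrix ι ι k)ˣ using hY
  simpa only [Matrix.coe_units_inv] using h.units_inv_right

theorem semiconjBy_nonsing_inv_symm_left (hA : IsUnit A) (h : SemiconjBy A X Y) :
    SemiconjBy A⁻¹ Y X := by
  lift A to (Matrix ι ι k)ˣ using hA
  simpa only [Matrix.coe_units_inv] using h.units_inv_symm_left

end SemiconjBy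

/-- The quantum Yang–Baxter equation `R₁₂R₁₃R₂₃ = R₂₃R₁₃R₁₂`. -/
def SatisfiesQYBE {α : Type*} [Semiring α] {n : ℕ}
    (R : Matrix (Fin n × Fin n) (Fin n × Fin n) α) : Prop :=
  L12 R * L13 R * L23 R = L23 R * L13 R * L12 R

namespace SatisfiesQYBE

theorem swapFactors {α : Type*} [Semiring α] {n : ℕ}
    {R : Matrix (Fin n × Fin n) (Fin n × Fin n) α} (h : SatisfiesQYBE R) :
    SatisfiesQYBE (swapFactors R) := by
  have reversed := congrArg (reindexRingEquiv α (reverseSlots (Fin n))) h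
  simp only [map_mul, reindex_reverseSlots_L12, reindex_reverseSlots_L13,
    reindex_reverseSlots_L23] at reversed
  exact reversed.symm

variable {k : Type*} [CommRing k] {n : ℕ} {R : Matrix (Fin n × Fin n) (Fin n × Fin n) k}

theorem inv (h : SatisfiesQYBE R) : SatisfiesQYBE R⁻¹ := by
  have inverted := congrArg (·⁻¹) h
  simp only [Matrix.mul_inv_rev, inv_L12, inv_L13, inv_L23, ← mul_assoc] at inverted
  exact inverted.symm

theorem semiconjBy_L23_transpose (h : SatisfiesQYBE R) :
    SemiconjBy (L23 Rᵀ) (L12 (pt2 R) * L13 (pt2 R)) (L13 (pt2 R) * L12 (pt2 R)) := by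
  have transposed := congrArg transposeSnd h
  rwa [mul_assoc (L23 R), L23_eq_one_kronecker, transposeSnd_mul_one_kronecker,
    transposeSnd_one_kronecker_mul, transposeSnd_L12_mul_L13, transposeSnd_L13_mul_L12,
    ← L23_eq_one_kronecker] at transposed

theorem semiconjBy_L23_transpose_inv (h : SatisfiesQYBE R) (ht2 : IsUnit (pt2 R)) :
    SemiconjBy (L23 Rᵀ) (L13 (pt2 R)⁻¹ * L12 (pt2 R)⁻¹) (L12 (pt2 R)⁻¹ * L13 (pt2 R)⁻¹) := by
  have inverted := semiconjBy_nonsing_inv_right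
    ((isUnit_L12 ht2).mul (isUnit_L13 ht2)) ((isUnit_L13 ht2).mul (isUnit_L12 ht2))
    h.semiconjBy_L23_transpose
  simpa only [Matrix.mul_inv_rev, inv_L12, inv_L13] using inverted

theorem semiconjBy_L12_transpose_inv (h : SatisfiesQYBE R) (ht1 : IsUnit (pt1 R)) :
    SemiconjBy (L12 Rᵀ) (L13 (pt1 R)⁻¹ * L23 (pt1 R)⁻¹) (L23 (pt1 R)⁻¹ * L13 (pt1 R)⁻¹) := by
  have swapped := h.swapFactors.semiconjBy_L23_transpose_inv (isUnit_swapFactors ht1)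
  rw [pt2_swapFactors, inv_swapFactors, transpose_swapFactors, ← reindex_reverseSlots_L12,
    ← reindex_reverseSlots_L13, ← reindex_reverseSlots_L23, ← map_mul, ← map_mul] at swapped
  exact SemiconjBy.of_map (reindexRingEquiv k (reverseSlots (Fin n))).injective swapped

end SatisfiesQYBE

/-- if `R` is an invertible solution of the QYBE with `R^{t₂}` and `(R⁻¹)^{t₁}`
invertible, then
(i) `(Rᵗ)₂₃·((R^{t₂})⁻¹)₁₃·((R^{t₂})⁻¹)₁₂ = ((R^{t₂})⁻¹)₁₂·((R^{t₂})⁻¹)₁₃·(Rᵗ)₂₃`;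
(ii) `(Rᵗ)₁₂·(((R⁻¹)^{t₁})⁻¹)₂₃·(((R⁻¹)^{t₁})⁻¹)₁₃ = (((R⁻¹)^{t₁})⁻¹)₁₃·(((R⁻¹)^{t₁})⁻¹)₂₃·(Rᵗ)₁₂`. -/
theorem stmt3 {k : Type*} [CommRing k] {n : ℕ} (hn : 0 < n)
    (R : Matrix (Fin n × Fin n) (Fin n × Fin n) k)
    (hR : IsUnit R)
    (hQYBE : L12 R * L13 R * L23 R = L23 R * L13 R * L12 R)
    (ht2 : IsUnit (pt2 R)) (ht1 : IsUnit (pt1 R⁻¹)) :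
    (L23 Rᵀ * L13 (pt2 R)⁻¹ * L12 (pt2 R)⁻¹ = L12 (pt2 R)⁻¹ * L13 (pt2 R)⁻¹ * L23 Rᵀ) ∧
    (L12 Rᵀ * L23 (pt1 R⁻¹)⁻¹ * L13 (pt1 R⁻¹)⁻¹ = L13 (pt1 R⁻¹)⁻¹ * L23 (pt1 R⁻¹)⁻¹ * L12 Rᵀ) := by
  have hSol : SatisfiesQYBE R := hQYBE
  constructor
  · rw [mul_assoc]
    exact hSol.semiconjBy_L23_transpose_inv ht2
  · have hUnit : IsUnit (L12 R⁻¹ᵀ) :=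
      isUnit_L12 ((Matrix.isUnit_transpose _).2 (Matrix.isUnit_nonsing_inv_iff.2 hR))
    have conj := semiconjBy_nonsing_inv_symm_left hUnit (hSol.inv.semiconjBy_L12_transpose_inv ht1)
    rw [inv_L12, ← Matrix.transpose_nonsing_inv,
      Matrix.nonsing_inv_nonsing_inv _ ((Matrix.isUnit_iff_isUnit_det R).1 hR)] at conj
    rw [mul_assoc]
    exact conj
end

section
/- Let R be an invertible n²×n² matrix over k satisfying the quantum Yang–Baxter equation, let x₁, …, x_m ∈ k with x_{i₀} = −1 for some index i₀, and suppose the braiding PR satisfies the minimal polynomial equation ∏_{j=1}^{m}(PR − x_j·I) = 0. Define R' := P + P·∏_{j ≠ i₀}(PR − x_j·I). Then: (i) (PR + I)(PR' − I) = 0; (ii) R₁₂·R₁₃·R'₂₃ = R'₂₃·R₁₃·R₁₂; (iii) R₂₃·R₁₃·R'₁₂ = R'₁₂·R₁₃·R₂₃; (iv) R₂₁·R'₁₂ = R'₂₁·R₁₂, where R₂₁ := P·R·P and R'₂₁ := P·R'·P. Thus the pair (R, R') satisfies the compatibility conditions required for the braided vector algebra V(R',R) and braided covector algebra V^∨(R',R₂₁⁻¹).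 -/
open Matrix

/-- The permutation matrix `P` with entries `P^{(i,j)}_{(k,l)} = δ_{il} δ_{jk}`. -/
def permP (k : Type*) [Semiring k] (n : ℕ) : Matrix (Fin n × Fin n) (Fin n × Fin n) k :=
  Matrix.of fun p q => if p.1 = q.2 ∧ p.2 = q.1 then 1 else 0

/-!
Everything reduces to the braiding `B = PR`: any `R'` of the form `P f(B)` with `f` a polynomial is
compatible with `R`. Since `P₂₃` exchanges `R₁₂` and `R₁₃`, the Yang–Baxter equation says that
`B₂₃` commutes with `R₁₃R₁₂`; hence so does `f(B)₂₃`, and moving `P₂₃` to the front gives (ii).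
Exchanging the roles of `12` and `23` gives (iii), and (iv) is the commutation of `B` with `f(B)`.
For (i), take `f = 1 + q` with `q = ∏_{j ≠ i₀} (X - x_j)`, so that `(X + 1) q` annihilates `B`.
-/

open Polynomial

section PolynomialsInAnAlgebra

variable {k A : Type*} [CommSemiring k] [Semiring A] [Algebra k A]

theorem commute_aeval_right {a b : A} (h : Commute a b) (f : k[X]) : Commute a (aeval b f) :=
  Algebra.commute_of_mem_adjoin_singleton_of_commute (aeval_mem_adjoin_singleton k b) h

theorem commute_mul_of_yangBaxter {M : Type*} [Semigroup M] {a b c p : M} (hap : a * p = p * b)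
    (hbp : b * p = p * a) (hYB : a * b * c = c * b * a) : Commute (b * a) (p * c) :=
  calc b * a * (p * c)
    _ = b * (a * p) * c := by simp only [mul_assoc]
    _ = b * p * b * c := by rw [hap]; simp only [mul_assoc]
    _ = p * (a * b * c) := by rw [hbp]; simp only [mul_assoc]
    _ = p * c * (b * a) := by rw [hYB]; simp only [mul_assoc]

theorem yangBaxter_mul_aeval {a b c p : A} (hap : a * p = p * b) (hbp : b * p = p * a)
    (hYB : a * b * c = c * b * a) (f : k[X]) :
    a * b * (p * aeval (p * c) f) = p * aeval (p * c) f * b * a := by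
  have hcomm : Commute (b * a) (aeval (p * c) f) :=
    commute_aeval_right (commute_mul_of_yangBaxter hap hbp hYB) f
  calc a * b * (p * aeval (p * c) f)
    _ = a * (b * p) * aeval (p * c) f := by simp only [mul_assoc]
    _ = a * p * a * aeval (p * c) f := by rw [hbp]; simp only [mul_assoc]
    _ = p * (b * a * aeval (p * c) f) := by rw [hap]; simp only [mul_assoc]
    _ = p * aeval (p * c) f * b * a := by rw [hcomm.eq]; simp only [mul_assoc]

end PolynomialsInAnAlgebra

section LinearFactors

variable {k A : Type*} [CommRing k] [Ring A] [Algebra k A] {m : ℕ} (b : A) (x : Fin m → k)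

theorem map_aeval_ofFn_X_sub_C :
    (List.ofFn fun j => X - C (x j)).map (aeval b) = List.ofFn fun j => b - x j • (1 : A) := by
  simp [List.map_ofFn, Function.comp_def, Algebra.algebraMap_eq_smul_one]

theorem aeval_prod_eraseIdx_ofFn_X_sub_C (i : ℕ) :
    aeval b ((List.ofFn fun j => X - C (x j)).eraseIdx i).prod =
      ((List.ofFn fun j => b - x j • (1 : A)).eraseIdx i).prod := by
  rw [map_list_prod, ← List.eraseIdx_map, map_aeval_ofFn_X_sub_C]

theorem aeval_X_sub_C_mul_prod_eraseIdx_ofFn (i : Fin m) :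
    aeval b ((X - C (x i)) * ((List.ofFn fun j => X - C (x j)).eraseIdx i).prod) =
      (List.ofFn fun j => b - x j • (1 : A)).prod := by
  have hprod : (X - C (x i)) * ((List.ofFn fun j => X - C (x j)).eraseIdx i).prod =
      (List.ofFn fun j => X - C (x j)).prod := by
    simpa using List.CommMonoid.mul_prod_eraseIdx (l := List.ofFn fun j => X - C (x j))
      (i := i) (by simp)
  rw [hprod, map_list_prod, map_aeval_ofFn_X_sub_C]

end LinearFactors

section Flips

variable {k : Type*} [Semiring k] {n : ℕ}

theorem permP_eq_permMatrix :
    permP k n = Equiv.Perm.permMatrix k (Equiv.prodComm (Fin n) (Fin n)) := by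
  ext a b
  simp [permP, PEquiv.toMatrix_apply, Prod.ext_iff, eq_comm, and_comm]

theorem permP_mul_permP : permP k n * permP k n = 1 := by
  rw [permP_eq_permMatrix, ← Matrix.permMatrix_mul, ← Matrix.permMatrix_one]
  rfl

theorem permP_mul_cancel_left (M : Matrix (Fin n × Fin n) (Fin n × Fin n) k) :
    permP k n * (permP k n * M) = M := by
  rw [← mul_assoc, permP_mul_permP, one_mul]

/-- The flip of the first two entries of a triple; its permutation matrix is `P₁₂`. -/
def flip12 (n : ℕ) : Equiv.Perm (Fin n × Fin n × Fin n) where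
  toFun a := (a.2.1, a.1, a.2.2)
  invFun a := (a.2.1, a.1, a.2.2)

/-- The flip of the last two entries of a triple; its permutation matrix is `P₂₃`. -/
def flip23 (n : ℕ) : Equiv.Perm (Fin n × Fin n × Fin n) where
  toFun a := (a.1, a.2.2, a.2.1)
  invFun a := (a.1, a.2.2, a.2.1)

theorem L12_permP : L12 (permP k n) = (flip12 n).permMatrix k := by
  ext a b
  simp only [L12, permP, flip12, of_apply, PEquiv.toMatrix_apply, Equiv.toPEquiv_apply,
    Equiv.coe_fn_mk, Option.mem_def, Option.some.injEq, Prod.ext_iff]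
  grind

theorem L23_permP : L23 (permP k n) = (flip23 n).permMatrix k := by
  ext a b
  simp only [L23, permP, flip23, of_apply, PEquiv.toMatrix_apply, Equiv.toPEquiv_apply,
    Equiv.coe_fn_mk, Option.mem_def, Option.some.injEq, Prod.ext_iff]
  grind

variable (M : Matrix (Fin n × Fin n) (Fin n × Fin n) k)

theorem L12_mul_L23_permP : L12 M * L23 (permP k n) = L23 (permP k n) * L13 M := by
  rw [L23_permP, PEquiv.mul_toMatrix_toPEquiv, PEquiv.toMatrix_toPEquiv_mul]
  rfl

theorem L13_mul_L23_permP : L13 M * L23 (permP k n) = L23 (permP k n) * L12 M := by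
  rw [L23_permP, PEquiv.mul_toMatrix_toPEquiv, PEquiv.toMatrix_toPEquiv_mul]
  rfl

theorem L23_mul_L12_permP : L23 M * L12 (permP k n) = L12 (permP k n) * L13 M := by
  rw [L12_permP, PEquiv.mul_toMatrix_toPEquiv, PEquiv.toMatrix_toPEquiv_mul]
  rfl

theorem L13_mul_L12_permP : L13 M * L12 (permP k n) = L12 (permP k n) * L23 M := by
  rw [L12_permP, PEquiv.mul_toMatrix_toPEquiv, PEquiv.toMatrix_toPEquiv_mul]
  rfl

end Flips

section Embeddings

variable (k : Type*) [CommSemiring k] (m o : Type*) [Fintype m] [DecidableEq m] [Fintype o]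
  [DecidableEq o]

/-- The block-diagonal embedding `M ↦ M ⊗ 1` of square matrices, as a homomorphism of algebras. -/
def constBlockDiagonalAlgHom : Matrix m m k →ₐ[k] Matrix (m × o) (m × o) k :=
  AlgHom.ofLinearMap
    { toFun := fun M => Matrix.blockDiagonal fun _ => M
      map_add' := fun M N => Matrix.blockDiagonal_add (fun _ => M) fun _ => N
      map_smul' := fun c M => Matrix.blockDiagonal_smul c fun _ => M }
    Matrix.blockDiagonal_one
    fun M N => Matrix.blockDiagonal_mul (fun _ => M) fun _ => N

variable (n : ℕ)

/-- `M ↦ M₁₂` as a homomorphism of algebras, so that it commutes with evaluating polynomials. -/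
def L12AlgHom : Matrix (Fin n × Fin n) (Fin n × Fin n) k →ₐ[k]
    Matrix (Fin n × Fin n × Fin n) (Fin n × Fin n × Fin n) k :=
  (Matrix.reindexAlgEquiv k k (Equiv.prodAssoc (Fin n) (Fin n) (Fin n))).toAlgHom.comp
    (constBlockDiagonalAlgHom k (Fin n × Fin n) (Fin n))

/-- `M ↦ M₂₃` as a homomorphism of algebras, so that it commutes with evaluating polynomials. -/
def L23AlgHom : Matrix (Fin n × Fin n) (Fin n × Fin n) k →ₐ[k]
    Matrix (Fin n × Fin n × Fin n) (Fin n × Fin n × Fin n) k :=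
  (Matrix.reindexAlgEquiv k k (Equiv.prodComm (Fin n × Fin n) (Fin n))).toAlgHom.comp
    (constBlockDiagonalAlgHom k (Fin n × Fin n) (Fin n))

variable {k n} (M N : Matrix (Fin n × Fin n) (Fin n × Fin n) k) (f : k[X])

theorem L12AlgHom_apply : L12AlgHom k n M = L12 M := rfl

theorem L23AlgHom_apply : L23AlgHom k n M = L23 M := rfl

theorem L12_mul_aeval : L12 (M * aeval (M * N) f) = L12 M * aeval (L12 M * L12 N) f := by
  simp only [← L12AlgHom_apply, ← map_mul, aeval_algHom_apply]

theorem L23_mul_aeval : L23 (M * aeval (M * N) f) = L23 M * aeval (L23 M * L23 N) f := by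
  simp only [← L23AlgHom_apply, ← map_mul, aeval_algHom_apply]

end Embeddings

section Compatibility

variable {k : Type*} [CommSemiring k] {n : ℕ} {R : Matrix (Fin n × Fin n) (Fin n × Fin n) k}

theorem L12_mul_L13_mul_L23_permP_mul_aeval
    (hQYBE : L12 R * L13 R * L23 R = L23 R * L13 R * L12 R) (f : k[X]) :
    L12 R * L13 R * L23 (permP k n * aeval (permP k n * R) f) =
      L23 (permP k n * aeval (permP k n * R) f) * L13 R * L12 R := by
  rw [L23_mul_aeval]
  exact yangBaxter_mul_aeval (L12_mul_L23_permP R) (L13_mul_L23_permP R) hQYBE f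

theorem L23_mul_L13_mul_L12_permP_mul_aeval
    (hQYBE : L12 R * L13 R * L23 R = L23 R * L13 R * L12 R) (f : k[X]) :
    L23 R * L13 R * L12 (permP k n * aeval (permP k n * R) f) =
      L12 (permP k n * aeval (permP k n * R) f) * L13 R * L23 R := by
  rw [L12_mul_aeval]
  exact yangBaxter_mul_aeval (L23_mul_L12_permP R) (L13_mul_L12_permP R) hQYBE.symm f

variable (R) in
theorem permP_conj_mul_permP_mul_aeval (f : k[X]) :
    permP k n * R * permP k n * (permP k n * aeval (permP k n * R) f) =
      permP k n * (permP k n * aeval (permP k n * R) f) * permP k n * R := by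
  rw [mul_assoc (permP k n * R), permP_mul_cancel_left, mul_assoc _ (permP k n) R]
  exact (commute_aeval_right (Commute.refl _) f).eq

end Compatibility

theorem stmt5_general {k : Type*} [CommRing k] {n : ℕ}
    (R : Matrix (Fin n × Fin n) (Fin n × Fin n) k)
    (hQYBE : L12 R * L13 R * L23 R = L23 R * L13 R * L12 R)
    (q : k[X]) (hq : aeval (permP k n * R) ((X + 1) * q) = 0)
    (R' : Matrix (Fin n × Fin n) (Fin n × Fin n) k)
    (hR' : R' = permP k n + permP k n * aeval (permP k n * R) q) :
    ((permP k n * R + 1) * (permP k n * R' - 1) = 0) ∧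
    (L12 R * L13 R * L23 R' = L23 R' * L13 R * L12 R) ∧
    (L23 R * L13 R * L12 R' = L12 R' * L13 R * L23 R) ∧
    ((permP k n * R * permP k n) * R' = (permP k n * R' * permP k n) * R) := by
  obtain rfl : R' = permP k n * aeval (permP k n * R) (1 + q) := by
    rw [hR', map_add, map_one, mul_add, mul_one]
  refine ⟨?_, L12_mul_L13_mul_L23_permP_mul_aeval hQYBE _,
    L23_mul_L13_mul_L12_permP_mul_aeval hQYBE _, permP_conj_mul_permP_mul_aeval R _⟩
  rw [permP_mul_cancel_left, map_add, map_one, add_sub_cancel_left]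
  simpa only [map_mul, map_add, map_one, aeval_X] using hq

/-- let `R` be an invertible solution of the QYBE, `x₁,…,x_m ∈ k` with
`x_{i₀} = −1`, and suppose the braiding `PR` satisfies `∏_{j=1}^{m} (PR − x_j·I) = 0`.
With `R' := P + P·∏_{j ≠ i₀}(PR − x_j·I)` one has
(i) `(PR + I)(PR' − I) = 0`; (ii) `R₁₂R₁₃R'₂₃ = R'₂₃R₁₃R₁₂`;
(iii) `R₂₃R₁₃R'₁₂ = R'₁₂R₁₃R₂₃`; (iv) `R₂₁R'₁₂ = R'₂₁R₁₂` where `R₂₁ = PRP`, `R'₂₁ = PR'P`. -/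
theorem stmt5 {k : Type*} [CommRing k] {n : ℕ} (hn : 0 < n)
    (R : Matrix (Fin n × Fin n) (Fin n × Fin n) k)
    (hR : IsUnit R)
    (hQYBE : L12 R * L13 R * L23 R = L23 R * L13 R * L12 R)
    {m : ℕ} (x : Fin m → k) (i0 : Fin m) (hx : x i0 = -1)
    (hmin : (List.ofFn fun j : Fin m =>
        permP k n * R - x j • (1 : Matrix (Fin n × Fin n) (Fin n × Fin n) k)).prod = 0)
    (R' : Matrix (Fin n × Fin n) (Fin n × Fin n) k)
    (hR' : R' = permP k n + permP k n *
        ((List.ofFn fun j : Fin m =>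
          permP k n * R - x j • (1 : Matrix (Fin n × Fin n) (Fin n × Fin n) k)).eraseIdx
            i0.val).prod) :
    ((permP k n * R + 1) * (permP k n * R' - 1) = 0) ∧
    (L12 R * L13 R * L23 R' = L23 R' * L13 R * L12 R) ∧
    (L23 R * L13 R * L12 R' = L12 R' * L13 R * L23 R) ∧
    ((permP k n * R * permP k n) * R' = (permP k n * R' * permP k n) * R) := by
  have hq := aeval_X_sub_C_mul_prod_eraseIdx_ofFn (permP k n * R) x i0
  rw [hx, C_neg, C_1, sub_neg_eq_add, hmin] at hq
  exact stmt5_general R hQYBE _ hq R' (by rw [hR', aeval_prod_eraseIdx_ofFn_X_sub_C])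
end

section
/- Let R be an n²×n² matrix over k, and let m, m⁺, m⁻ be n×n matrices over S whose transposes mᵗ, (m⁺)ᵗ, (m⁻)ᵗ are invertible in the matrix ring Mₙ(S). Put m̂ := ((mᵗ)⁻¹)ᵗ, m̂⁺ := (((m⁺)ᵗ)⁻¹)ᵗ, m̂⁻ := (((m⁻)ᵗ)⁻¹)ᵗ. Then: (i) R·m₁·m₂ = m₂·m₁·R if and only if R·m̂₂·m̂₁ = m̂₁·m̂₂·R; (ii) R·m⁺₁·m⁻₂ = m⁻₂·m⁺₁·R if and only if R·m̂⁻₂·m̂⁺₁ = m̂⁺₁·m̂⁻₂·R. (These equivalences are the key step showing that S(m^±) := ((m^±)ᵗ)⁻¹, extended as an anti-algebra map, respects the defining relations of the quotient bialgebra Û(R) and hence makes Û(R) a Hopf algebra.) -/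
open Matrix

/-- For an `n×n` matrix `m` over `S`, the `n²×n²` matrix `m₁` with entries
`(m₁)^{(i,j)}_{(k,l)} = m^i_k δ_{jl}`. -/
def matLift1 {S : Type*} [Semiring S] {n : ℕ} (m : Matrix (Fin n) (Fin n) S) :
    Matrix (Fin n × Fin n) (Fin n × Fin n) S :=
  Matrix.of fun p q => if p.2 = q.2 then m p.1 q.1 else 0

/-- For an `n×n` matrix `m` over `S`, the `n²×n²` matrix `m₂` with entries
`(m₂)^{(i,j)}_{(k,l)} = δ_{ik} m^j_l`. -/
def matLift2 {S : Type*} [Semiring S] {n : ℕ} (m : Matrix (Fin n) (Fin n) S) :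
    Matrix (Fin n × Fin n) (Fin n × Fin n) S :=
  Matrix.of fun p q => if p.1 = q.1 then m p.2 q.2 else 0

/-!
Over a noncommutative ring transposition still reverses products with `R`, whose entries are
central, but it keeps the order of `m⁺₁ m⁻₂`, whose entries are the products `(m⁺)^i_k (m⁻)^j_l`.
Transposing `R m⁺₁ m⁻₂ = m⁻₂ m⁺₁ R` thus gives `Rᵗ (m⁻ᵗ₂ m⁺ᵗ₁) = (m⁺ᵗ₁ m⁻ᵗ₂) Rᵗ`. Both bracketed
factors are invertible, so this is equivalent to the same relation between their inverses, and
transposing back gives the relation for `m̂⁺`, `m̂⁻`.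
-/

open scoped Kronecker

section Transpose

variable {ι κ ν S : Type*} [Fintype κ] [Mul S] [AddCommMonoid S]

theorem transpose_mul_of_commute {A : Matrix ι κ S} {B : Matrix κ ν S}
    (h : ∀ i j l, Commute (A i j) (B j l)) : (A * B)ᵀ = Bᵀ * Aᵀ := by
  ext l i
  exact Finset.sum_congr rfl fun j _ => h i j l

theorem semiconjBy_transpose_iff {T X Y : Matrix κ κ S} (hT : ∀ i j, T i j ∈ Set.center S) :
    SemiconjBy Tᵀ Yᵀ Xᵀ ↔ SemiconjBy T X Y := by
  have transpose_mul_left : (T * X)ᵀ = Xᵀ * Tᵀ :=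
    transpose_mul_of_commute fun i j l => (hT i j).comm (X j l)
  have transpose_mul_right : (Y * T)ᵀ = Tᵀ * Yᵀ :=
    transpose_mul_of_commute fun i j l => ((hT j l).comm (Y i j)).symm
  rw [SemiconjBy, SemiconjBy, ← transpose_mul_left, ← transpose_mul_right, Matrix.transpose_inj,
    eq_comm]

end Transpose

section Lift

variable {S : Type*} [Semiring S] {n : ℕ}

theorem matLift1_mul_matLift2 (a b : Matrix (Fin n) (Fin n) S) :
    matLift1 a * matLift2 b = a ⊗ₖ b := by
  ext p q
  simp [matLift1, matLift2, Matrix.mul_apply, Fintype.sum_prod_type]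

theorem matLift2_mul_matLift1 (a b : Matrix (Fin n) (Fin n) S) :
    matLift2 b * matLift1 a = Matrix.kroneckerMap (fun x y => y * x) a b := by
  ext p q
  simp [matLift1, matLift2, Matrix.mul_apply, Fintype.sum_prod_type]

theorem transpose_matLift1_mul_matLift2 (a b : Matrix (Fin n) (Fin n) S) :
    (matLift1 a * matLift2 b)ᵀ = matLift1 aᵀ * matLift2 bᵀ := by
  rw [matLift1_mul_matLift2, matLift1_mul_matLift2, Matrix.kroneckerMap_transpose]

theorem transpose_matLift2_mul_matLift1 (a b : Matrix (Fin n) (Fin n) S) :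
    (matLift2 b * matLift1 a)ᵀ = matLift2 bᵀ * matLift1 aᵀ := by
  rw [matLift2_mul_matLift1, matLift2_mul_matLift1, Matrix.kroneckerMap_transpose]

theorem matLift1_eq_blockDiagonal (a : Matrix (Fin n) (Fin n) S) :
    matLift1 a = Matrix.blockDiagonal fun _ => a :=
  rfl

theorem matLift2_eq_submatrix_prodComm (a : Matrix (Fin n) (Fin n) S) :
    matLift2 a = (matLift1 a).submatrix (Equiv.prodComm _ _) (Equiv.prodComm _ _) :=
  rfl

theorem matLift1_one : matLift1 (1 : Matrix (Fin n) (Fin n) S) = 1 :=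
  Matrix.blockDiagonal_one

theorem matLift1_mul (a b : Matrix (Fin n) (Fin n) S) :
    matLift1 (a * b) = matLift1 a * matLift1 b := by
  simp only [matLift1_eq_blockDiagonal, Matrix.blockDiagonal_mul]

theorem matLift2_one : matLift2 (1 : Matrix (Fin n) (Fin n) S) = 1 := by
  rw [matLift2_eq_submatrix_prodComm, matLift1_one, Matrix.submatrix_one_equiv]

theorem matLift2_mul (a b : Matrix (Fin n) (Fin n) S) :
    matLift2 (a * b) = matLift2 a * matLift2 b := by
  simp only [matLift2_eq_submatrix_prodComm, matLift1_mul, Matrix.submatrix_mul_equiv]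

/-- The lift `m ↦ m₁` as a monoid homomorphism, so that it carries inverses to inverses. -/
def matLift1Hom : Matrix (Fin n) (Fin n) S →* Matrix (Fin n × Fin n) (Fin n × Fin n) S where
  toFun := matLift1
  map_one' := matLift1_one
  map_mul' := matLift1_mul

/-- The lift `m ↦ m₂` as a monoid homomorphism, so that it carries inverses to inverses. -/
def matLift2Hom : Matrix (Fin n) (Fin n) S →* Matrix (Fin n × Fin n) (Fin n × Fin n) S where
  toFun := matLift2
  map_one' := matLift2_one
  map_mul' := matLift2_mul

theorem semiconjBy_matLift_inv_iff (T : Matrix (Fin n × Fin n) (Fin n × Fin n) S)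
    (u v : (Matrix (Fin n) (Fin n) S)ˣ) :
    SemiconjBy T (matLift1 ↑u⁻¹ * matLift2 ↑v⁻¹) (matLift2 ↑v⁻¹ * matLift1 ↑u⁻¹) ↔
      SemiconjBy T (matLift2 ↑v * matLift1 ↑u) (matLift1 ↑u * matLift2 ↑v) :=
  let u₁ := Units.map matLift1Hom u
  let v₂ := Units.map matLift2Hom v
  SemiconjBy.units_inv_right_iff (x := v₂ * u₁) (y := u₁ * v₂)

end Lift

theorem stmt6_general {S : Type*} [Semiring S] {n : ℕ}
    {T : Matrix (Fin n × Fin n) (Fin n × Fin n) S} (hT : ∀ p q, T p q ∈ Set.center S)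
    {a b u v : Matrix (Fin n) (Fin n) S} (hau : aᵀ * u = 1) (hua : u * aᵀ = 1)
    (hbv : bᵀ * v = 1) (hvb : v * bᵀ = 1) :
    T * matLift1 a * matLift2 b = matLift2 b * matLift1 a * T ↔
      T * matLift2 vᵀ * matLift1 uᵀ = matLift1 uᵀ * matLift2 vᵀ * T := by
  rw [Matrix.mul_assoc T, Matrix.mul_assoc T]
  calc SemiconjBy T (matLift1 a * matLift2 b) (matLift2 b * matLift1 a)
    _ ↔ SemiconjBy Tᵀ (matLift2 bᵀ * matLift1 aᵀ) (matLift1 aᵀ * matLift2 bᵀ) := by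
      rw [← semiconjBy_transpose_iff hT, transpose_matLift1_mul_matLift2,
        transpose_matLift2_mul_matLift1]
    _ ↔ SemiconjBy Tᵀ (matLift1 u * matLift2 v) (matLift2 v * matLift1 u) :=
      (semiconjBy_matLift_inv_iff Tᵀ ⟨aᵀ, u, hau, hua⟩ ⟨bᵀ, v, hbv, hvb⟩).symm
    _ ↔ SemiconjBy T (matLift2 vᵀ * matLift1 uᵀ) (matLift1 uᵀ * matLift2 vᵀ) := by
      rw [← semiconjBy_transpose_iff hT, transpose_matLift1_mul_matLift2,
        transpose_matLift2_mul_matLift1, Matrix.transpose_transpose, Matrix.transpose_transpose]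

/-- with `m̂ := ((mᵗ)⁻¹)ᵗ` (here `w` is the two-sided inverse of `mᵗ`, so
`m̂ = wᵗ`, and similarly for `m⁺`, `m⁻`):
(i) `R·m₁·m₂ = m₂·m₁·R ↔ R·m̂₂·m̂₁ = m̂₁·m̂₂·R`;
(ii) `R·m⁺₁·m⁻₂ = m⁻₂·m⁺₁·R ↔ R·m̂⁻₂·m̂⁺₁ = m̂⁺₁·m̂⁻₂·R`. -/
theorem stmt6 {k S : Type*} [CommRing k] [Ring S] [Algebra k S] {n : ℕ} (hn : 0 < n)
    (R : Matrix (Fin n × Fin n) (Fin n × Fin n) k)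
    (m mp mm w wp wm : Matrix (Fin n) (Fin n) S)
    (hw1 : mᵀ * w = 1) (hw2 : w * mᵀ = 1)
    (hwp1 : mpᵀ * wp = 1) (hwp2 : wp * mpᵀ = 1)
    (hwm1 : mmᵀ * wm = 1) (hwm2 : wm * mmᵀ = 1) :
    (R.map (algebraMap k S) * matLift1 m * matLift2 m =
        matLift2 m * matLift1 m * R.map (algebraMap k S) ↔
      R.map (algebraMap k S) * matLift2 wᵀ * matLift1 wᵀ =
        matLift1 wᵀ * matLift2 wᵀ * R.map (algebraMap k S)) ∧
    (R.map (algebraMap k S) * matLift1 mp * matLift2 mm =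
        matLift2 mm * matLift1 mp * R.map (algebraMap k S) ↔
      R.map (algebraMap k S) * matLift2 wmᵀ * matLift1 wpᵀ =
        matLift1 wpᵀ * matLift2 wmᵀ * R.map (algebraMap k S)) := by
  have hR (p q) : R.map (algebraMap k S) p q ∈ Set.center S := Set.algebraMap_mem_center (R p q)
  exact ⟨stmt6_general hR hw1 hw2 hw1 hw2, stmt6_general hR hwp1 hwp2 hwm1 hwm2⟩
end

section
/- Given a dual pairing of bialgebras H and A over k, let ℛ : A → H be a k-linear map that is convolution invertible, with convolution inverse ℛ⁻¹ (so ℛ ∗ ℛ⁻¹ = ℛ⁻¹ ∗ ℛ = η_H ∘ ε_A). If g, h ∈ H satisfy ∂^R g = ℛ ∗ (∂^L g) ∗ ℛ⁻¹ and ∂^R h = ℛ ∗ (∂^L h) ∗ ℛ⁻¹, then the product gh satisfies ∂^R(gh) = ℛ ∗ (∂^L(gh)) ∗ ℛ⁻¹. (Consequently, the weak quasitriangularity conditions of a weakly quasitriangular dual pair need only be verified on algebra generators of H.) -/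
open TensorProduct

/-- Convolution product of linear maps from a coalgebra `A` to an algebra `H`:
`(f ∗ g)(a) = Σ f(a₍₁₎)·g(a₍₂₎)`. -/
noncomputable def conv {k A H : Type*} [CommRing k]
    [AddCommMonoid A] [Module k A] [Coalgebra k A]
    [Ring H] [Algebra k H] (f g : A →ₗ[k] H) : A →ₗ[k] H :=
  LinearMap.mul' k H ∘ₗ TensorProduct.map f g ∘ₗ (Coalgebra.comul : A →ₗ[k] A ⊗[k] A)

/-- Left differentiation operator `∂^L h : A → H`, `(∂^L h)(a) = Σ ⟨h₍₁₎, a⟩·h₍₂₎`,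
associated with a pairing `pair : H → (A → k)`. -/
noncomputable def dL {k A H : Type*} [CommRing k]
    [AddCommMonoid A] [Module k A]
    [AddCommMonoid H] [Module k H] [Coalgebra k H]
    (pair : H →ₗ[k] A →ₗ[k] k) (h : H) : A →ₗ[k] H :=
  ((TensorProduct.lift (LinearMap.smulRightₗ ∘ₗ pair)).comp
    (Coalgebra.comul : H →ₗ[k] H ⊗[k] H)) h

/-- Right differentiation operator `∂^R h : A → H`, `(∂^R h)(a) = Σ h₍₁₎·⟨h₍₂₎, a⟩`. -/
noncomputable def dR {k A H : Type*} [CommRing k]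
    [AddCommMonoid A] [Module k A]
    [AddCommMonoid H] [Module k H] [Coalgebra k H]
    (pair : H →ₗ[k] A →ₗ[k] k) (h : H) : A →ₗ[k] H :=
  ((TensorProduct.lift (LinearMap.smulRightₗ ∘ₗ pair).flip).comp
    (Coalgebra.comul : H →ₗ[k] H ⊗[k] H)) h

/-- The unit of the convolution algebra `Hom(A, H)`: `a ↦ ε(a)·1_H`. -/
noncomputable def convUnit (k : Type*) {A : Type*} (H : Type*) [CommRing k]
    [AddCommMonoid A] [Module k A] [Coalgebra k A]
    [Ring H] [Algebra k H] : A →ₗ[k] H :=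
  (Algebra.linearMap k H).comp (Coalgebra.counit : A →ₗ[k] k)

section Convolution

variable {k A H : Type*} [CommRing k] [AddCommMonoid A] [Module k A] [Coalgebra k A]
  [Ring H] [Algebra k H]

theorem toConv_conv (f g : A →ₗ[k] H) :
    WithConv.toConv (conv f g) = WithConv.toConv f * WithConv.toConv g :=
  rfl

theorem conv_smulRight_smulRight (p q : A →ₗ[k] k) (x y : H) :
    conv (p.smulRight x) (q.smulRight y) = (conv p q).smulRight (x * y) := by
  have mul'_comp_map : LinearMap.mul' k H ∘ₗ TensorProduct.map (p.smulRight x) (q.smulRight y) =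
      (LinearMap.mul' k k ∘ₗ TensorProduct.map p q).smulRight (x * y) := by
    ext a b
    simp [smul_smul, mul_comm]
  exact congrArg (· ∘ₗ Coalgebra.comul) mul'_comp_map

theorem map_mul_eq_conv_of_map_mul_tmul {B C : Type*} [Semiring B] [Algebra k B]
    [Semiring C] [Algebra k C]
    (T : B ⊗[k] C →ₗ[k] A →ₗ[k] H)
    (hT : ∀ b₁ b₂ c₁ c₂, T ((b₁ * b₂) ⊗ₜ (c₁ * c₂)) = conv (T (b₁ ⊗ₜ c₁)) (T (b₂ ⊗ₜ c₂)))
    (s t : B ⊗[k] C) : T (s * t) = conv (T s) (T t) := by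
  let toConvT : B ⊗[k] C →ₗ[k] WithConv (A →ₗ[k] H) :=
    (WithConv.linearEquiv k (A →ₗ[k] H)).symm ∘ₗ T
  have toConvT_mul : toConvT (s * t) = toConvT s * toConvT t :=
    LinearMap.map_mul_of_map_mul_tmul
      (fun b₁ b₂ c₁ c₂ ↦ congrArg WithConv.toConv (hT b₁ b₂ c₁ c₂)) s t
  exact congrArg WithConv.ofConv toConvT_mul

theorem conv_conj_conj {R L : A →ₗ[k] H} (hLR : conv L R = convUnit k H) (x y : A →ₗ[k] H) :
    conv (conv (conv R x) L) (conv (conv R y) L) = conv (conv R (conv x y)) L := by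
  apply WithConv.toConv_injective
  have toConv_hLR : WithConv.toConv L * WithConv.toConv R = 1 := congrArg WithConv.toConv hLR
  simp only [toConv_conv, mul_assoc]
  rw [← mul_assoc (WithConv.toConv L), toConv_hLR, one_mul]

end Convolution

section Differentiation

variable {k A H : Type*} [CommRing k] [AddCommMonoid A] [Module k A] [Coalgebra k A]
  [Ring H] [Bialgebra k H] {pair : H →ₗ[k] A →ₗ[k] k}

theorem dL_mul (hmul : ∀ g h, pair (g * h) = conv (pair g) (pair h)) (g h : H) :
    dL pair (g * h) = conv (dL pair g) (dL pair h) := by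
  simp only [dL, LinearMap.comp_apply, Bialgebra.comul_mul]
  refine map_mul_eq_conv_of_map_mul_tmul _ (fun x₁ x₂ y₁ y₂ ↦ ?_) _ _
  calc (pair (x₁ * x₂)).smulRight (y₁ * y₂)
      = (conv (pair x₁) (pair x₂)).smulRight (y₁ * y₂) := by rw [hmul]
    _ = conv ((pair x₁).smulRight y₁) ((pair x₂).smulRight y₂) :=
        (conv_smulRight_smulRight _ _ _ _).symm

theorem dR_mul (hmul : ∀ g h, pair (g * h) = conv (pair g) (pair h)) (g h : H) :
    dR pair (g * h) = conv (dR pair g) (dR pair h) := by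
  simp only [dR, LinearMap.comp_apply, Bialgebra.comul_mul]
  refine map_mul_eq_conv_of_map_mul_tmul _ (fun x₁ x₂ y₁ y₂ ↦ ?_) _ _
  calc (pair (y₁ * y₂)).smulRight (x₁ * x₂)
      = (conv (pair y₁) (pair y₂)).smulRight (x₁ * x₂) := by rw [hmul]
    _ = conv ((pair y₁).smulRight x₁) ((pair y₂).smulRight x₂) :=
        (conv_smulRight_smulRight _ _ _ _).symm

theorem stmt11_general (hmul : ∀ g h, pair (g * h) = conv (pair g) (pair h))
    {R L : A →ₗ[k] H} (hLR : conv L R = convUnit k H) {g h : H}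
    (hg : dR pair g = conv (conv R (dL pair g)) L)
    (hh : dR pair h = conv (conv R (dL pair h)) L) :
    dR pair (g * h) = conv (conv R (dL pair (g * h))) L :=
  calc dR pair (g * h) = conv (dR pair g) (dR pair h) := dR_mul hmul g h
    _ = conv (conv (conv R (dL pair g)) L) (conv (conv R (dL pair h)) L) := by rw [hg, hh]
    _ = conv (conv R (conv (dL pair g) (dL pair h))) L := conv_conj_conj hLR _ _
    _ = conv (conv R (dL pair (g * h))) L := by rw [dL_mul hmul]

end Differentiation

/-- given a dual pairing of bialgebras `H`, `A` and a convolution-invertible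
linear map `ℛ : A → H`, if `∂^R g = ℛ ∗ (∂^L g) ∗ ℛ⁻¹` and `∂^R h = ℛ ∗ (∂^L h) ∗ ℛ⁻¹`, then
`∂^R(gh) = ℛ ∗ (∂^L(gh)) ∗ ℛ⁻¹`. -/
theorem stmt11 {k H A : Type*} [CommRing k]
    [Ring H] [Bialgebra k H] [Ring A] [Bialgebra k A]
    (pair : H →ₗ[k] A →ₗ[k] k)
    (hmulH : ∀ g h : H, pair (g * h) = conv (pair g) (pair h))
    (hmulA : ∀ a b : A, pair.flip (a * b) = conv (pair.flip a) (pair.flip b))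
    (honeH : pair 1 = (Coalgebra.counit : A →ₗ[k] k))
    (honeA : ∀ h : H, pair h 1 = (Coalgebra.counit : H →ₗ[k] k) h)
    (R Rinv : A →ₗ[k] H)
    (hR1 : conv R Rinv = convUnit k H) (hR2 : conv Rinv R = convUnit k H)
    (g h : H)
    (hg : dR pair g = conv (conv R (dL pair g)) Rinv)
    (hh : dR pair h = conv (conv R (dL pair h)) Rinv) :
    dR pair (g * h) = conv (conv R (dL pair (g * h))) Rinv := by
  exact stmt11_general hmulH hR2 hg hh
end

section
/- Let k be a commutative ring, n a positive integer, and R an invertible n²×n² matrix over k such that R^{t₂} is invertible. Let K₀ be the n²×n² matrix with entries (K₀)^{(i,j)}_{(k,l)} = δ_{ij}δ_{kl} and P the permutation matrix. Assume: (a) for all indices i ≠ j and all m, (R⁻¹)^{(m,j)}_{(i,m)} = 0; and (b) for all indices m ≠ n' and all p, ((R^{t₂})⁻¹)^{(n',m)}_{(p,p)} = 0. Then (R⁻¹)^{t₁}·P·(R^{t₂})⁻¹·P·K₀ = D·K₀ for a diagonal matrix D of constants: explicitly, for all i, j, k, l, the entry [(R⁻¹)^{t₁}·P·(R^{t₂})⁻¹·P·K₀]^{(i,j)}_{(k,l)}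 equals δ_{ij}·δ_{kl}·Σ_{m,p} (R⁻¹)^{(m,j)}_{(j,m)}·((R^{t₂})⁻¹)^{(m,m)}_{(p,p)}. (This is the FRT condition guaranteeing that the FRT bialgebra A(R) extends to the Hopf algebra H_R.) -/
open Matrix

/-- The matrix `K₀` with entries `(K₀)^{(i,j)}_{(k,l)} = δ_{ij} δ_{kl}`. -/
def K0 (k : Type*) [Semiring k] (n : ℕ) : Matrix (Fin n × Fin n) (Fin n × Fin n) k :=
  Matrix.of fun p q => if p.1 = p.2 ∧ q.1 = q.2 then 1 else 0

theorem mul_apply_eq_sum_diag {ι κ μ S : Type*} [Fintype μ] [NonUnitalNonAssocSemiring S]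
    (M : Matrix ι (μ × μ) S) (N : Matrix (μ × μ) κ S) (p : ι) (q : κ)
    (hN : ∀ m l, m ≠ l → N (m, l) q = 0) :
    (M * N) p q = ∑ m, M p (m, m) * N (m, m) q := by
  rw [mul_apply, Fintype.sum_prod_type]
  refine Finset.sum_congr rfl fun m _ => Fintype.sum_eq_single m fun l hl => ?_
  rw [hN m l hl.symm, mul_zero]

section

variable {S ι : Type*} [Semiring S] {n : ℕ}

theorem permP_eq_toMatrix_prodComm :
    permP S n = (Equiv.prodComm (Fin n) (Fin n)).toPEquiv.toMatrix := by
  ext ⟨i, j⟩ ⟨a, b⟩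
  simp [permP, PEquiv.toMatrix_apply, and_comm]

theorem mul_permP_apply (M : Matrix ι (Fin n × Fin n) S) (p : ι) (q : Fin n × Fin n) :
    (M * permP S n) p q = M p q.swap := by
  rw [permP_eq_toMatrix_prodComm, PEquiv.mul_toMatrix_toPEquiv]
  rfl

theorem permP_mul_K0 : permP S n * K0 S n = K0 S n := by
  rw [permP_eq_toMatrix_prodComm, PEquiv.toMatrix_toPEquiv_mul]
  ext p q
  simp [K0, eq_comm]

theorem mul_K0_apply (M : Matrix ι (Fin n × Fin n) S) (p : ι) (a b : Fin n) :
    (M * K0 S n) p (a, b) = (∑ x, M p (x, x)) * if a = b then 1 else 0 := by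
  rw [mul_apply_eq_sum_diag M _ p (a, b) fun m l hml => by simp [K0, hml], Finset.sum_mul]
  simp [K0]

theorem pt1_mul_permP_mul_apply (A B : Matrix (Fin n × Fin n) (Fin n × Fin n) S)
    (i j : Fin n) (q : Fin n × Fin n) (hB : ∀ m l, m ≠ l → B (m, l) q = 0) :
    (pt1 A * permP S n * B) (i, j) q = ∑ m, A (m, j) (i, m) * B (m, m) q := by
  rw [mul_apply_eq_sum_diag _ _ _ _ hB]
  simp only [mul_permP_apply, pt1, of_apply, Prod.swap_prod_mk]

/-- `A` plays the role of `R⁻¹` and `B` that of `(R^{t₂})⁻¹`. -/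
theorem stmt14_general (A B : Matrix (Fin n × Fin n) (Fin n × Fin n) S)
    (hA : ∀ i j m : Fin n, i ≠ j → A (m, j) (i, m) = 0)
    (hB : ∀ m n' p : Fin n, m ≠ n' → B (n', m) (p, p) = 0) (i j a b : Fin n) :
    (pt1 A * permP S n * B * permP S n * K0 S n) (i, j) (a, b) =
      (if i = j then (1 : S) else 0) * (if a = b then (1 : S) else 0) *
        ∑ m : Fin n, ∑ p : Fin n, A (m, j) (j, m) * B (m, m) (p, p) := by
  have product_entry : (pt1 A * permP S n * B * permP S n * K0 S n) (i, j) (a, b) =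
      (∑ m, ∑ p, A (m, j) (i, m) * B (m, m) (p, p)) * if a = b then 1 else 0 := by
    rw [Matrix.mul_assoc _ (permP S n) (K0 S n), permP_mul_K0, mul_K0_apply, Finset.sum_comm]
    congr! 2 with p
    exact pt1_mul_permP_mul_apply A B i j (p, p) fun m l hml => hB l m p hml.symm
  rw [product_entry]
  obtain rfl | hij := eq_or_ne i j
  · simp
  · simp [hA i j _ hij, hij]

end

/-- under hypotheses (a) and (b), the FRT condition
`(R⁻¹)^{t₁}·P·(R^{t₂})⁻¹·P·K₀ = D·K₀` holds, with the explicit diagonal constant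
`Σ_{m,p} (R⁻¹)^{(m,j)}_{(j,m)}·((R^{t₂})⁻¹)^{(m,m)}_{(p,p)}`. -/
theorem stmt14 {k : Type*} [CommRing k] {n : ℕ} (hn : 0 < n)
    (R : Matrix (Fin n × Fin n) (Fin n × Fin n) k)
    (hR : IsUnit R) (ht2 : IsUnit (pt2 R))
    (ha : ∀ i j m : Fin n, i ≠ j → (R⁻¹) (m, j) (i, m) = 0)
    (hb : ∀ m n' p : Fin n, m ≠ n' → ((pt2 R)⁻¹) (n', m) (p, p) = 0) :
    ∀ i j a b : Fin n,
      (pt1 R⁻¹ * permP k n * (pt2 R)⁻¹ * permP k n * K0 k n) (i, j) (a, b) =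
        (if i = j then (1 : k) else 0) * (if a = b then (1 : k) else 0) *
          ∑ m : Fin n, ∑ p : Fin n, (R⁻¹) (m, j) (j, m) * ((pt2 R)⁻¹) (m, m) (p, p) :=
  stmt14_general R⁻¹ (pt2 R)⁻¹ ha hb
end

section
/- Let k be a commutative ring, q ∈ k an invertible element, and A an associative unital k-algebra containing elements E, x₁, x₂, x₃, x₄, and let c₁, c₂, c₃ ∈ k be scalars such that: x₄·E − q⁻³·E·x₄ = c₃·x₃; E·x₃ − q·x₃·E = c₂·x₂; E·x₂ − q⁻¹·x₂·E = c₁·x₁; and x₁·E = q³·E·x₁. Then E⁴·x₄ − (q³+q+q⁻¹+q⁻³)·E³·x₄·E + (q⁴+q²+2+q⁻²+q⁻⁴)·E²·x₄·E² − (q³+q+q⁻¹+q⁻³)·E·x₄·E³ + x₄·E⁴ = 0. (With E = E₁, x₄ = e⁴ = E₂, x₃ = e³, x₂ = e², x₁ = e¹ and the values c₃ = c₁ = [3]_q^{1/2} q^{−5/2}, c₂ = [2]_q q^{−3/2} arising from the spin-3/2 representation, this is the degree-4 quantum Serre relation E₁⁴E₂ − [4]₁_q E₁³E₂E₁ + [4]₂_q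 E₁²E₂E₁² − [4]₃_q E₁E₂E₁³ + E₂E₁⁴ = 0 in the double-bosonization construction of U_q(G₂); note q³+q+q⁻¹+q⁻³ = [4]_q and q⁴+q²+2+q⁻²+q⁻⁴ = [4]_q!/([2]_q![2]_q!).) -/
/-!
Let `L` and `R` be left and right multiplication by `E`. They commute, and the four relations say
that `R - q⁻³L`, `L - qR`, `L - q⁻¹R`, `R - q³L` carry `x₄` successively to multiples of
`x₃`, `x₂`, `x₁` and to `0`. So the product of these operators kills `x₄`. The scalars pair off into
inverses, so this product is `(L² - (q³ + q⁻³)LR + R²)(L² - (q + q⁻¹)LR + R²)`,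
whose expansion is the Serre polynomial.
-/

section CommutingElements

variable {k B : Type*} [CommRing k] [Ring B] [Algebra k B] {X Y : B}

theorem commute_sub_smul_sub_smul (hXY : Commute X Y) (a b : k) :
    Commute (X - a • Y) (Y - b • X) :=
  (hXY.sub_right ((Commute.refl X).smul_right b)).sub_left
    (((Commute.refl Y).sub_right (hXY.symm.smul_right b)).smul_left a)

theorem sub_smul_mul_sub_smul_of_commute (hXY : Commute X Y) (a b : k) :
    (X - a • Y) * (X - b • Y) = X ^ 2 - (a + b) • (X * Y) + (a * b) • Y ^ 2 := by
  simp only [sub_mul, mul_sub, smul_mul_assoc, mul_smul_comm, hXY.eq, pow_two]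
  module

theorem palindromic_quadratic_mul (hXY : Commute X Y) (s t : k) :
    (X ^ 2 - s • (X * Y) + Y ^ 2) * (X ^ 2 - t • (X * Y) + Y ^ 2) =
      X ^ 4 - (s + t) • (X ^ 3 * Y) + (2 + s * t) • (X ^ 2 * Y ^ 2)
        - (s + t) • (X * Y ^ 3) + Y ^ 4 := by
  have hYX : Y * X = X * Y := hXY.eq.symm
  have hYX' (Z : B) : Y * (X * Z) = X * (Y * Z) := hXY.symm.left_comm Z
  simp only [pow_succ, pow_zero, one_mul, add_mul, mul_add, sub_mul, mul_sub, smul_mul_assoc,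
    mul_smul_comm, mul_assoc, hYX, hYX']
  module

theorem sub_smul_prod_eq_quartic (hXY : Commute X Y) {p p' r r' : k}
    (hp : p * p' = 1) (hr : r * r' = 1) :
    (Y - p • X) * (X - r' • Y) * (X - r • Y) * (Y - p' • X) =
      X ^ 4 - (p + p' + (r + r')) • (X ^ 3 * Y) + (2 + (p + p') * (r + r')) • (X ^ 2 * Y ^ 2)
        - (p + p' + (r + r')) • (X * Y ^ 3) + Y ^ 4 := by
  have outer : (Y - p • X) * (Y - p' • X) = X ^ 2 - (p + p') • (X * Y) + Y ^ 2 := by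
    rw [sub_smul_mul_sub_smul_of_commute hXY.symm, hp, one_smul, hXY.eq]
    abel
  have inner : (X - r' • Y) * (X - r • Y) = X ^ 2 - (r + r') • (X * Y) + Y ^ 2 := by
    rw [sub_smul_mul_sub_smul_of_commute hXY, mul_comm r', hr, one_smul, add_comm r']
  have swap : Commute ((X - r' • Y) * (X - r • Y)) (Y - p' • X) :=
    (commute_sub_smul_sub_smul hXY r' p').mul_left (commute_sub_smul_sub_smul hXY r p')
  rw [mul_assoc (Y - p • X), mul_assoc (Y - p • X), swap.eq, ← mul_assoc, outer, inner,
    palindromic_quadratic_mul hXY]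

end CommutingElements

theorem stmt19_general {k V : Type*} [CommRing k] [AddCommGroup V] [Module k V]
    {p p' r r' : k} (hp : p * p' = 1) (hr : r * r' = 1)
    {L R : Module.End k V} (hLR : Commute L R) {x1 x2 x3 x4 : V} {c1 c2 c3 : k}
    (h4 : (R - p' • L) x4 = c3 • x3) (h3 : (L - r • R) x3 = c2 • x2)
    (h2 : (L - r' • R) x2 = c1 • x1) (h1 : (R - p • L) x1 = 0) :
    (L ^ 4 - (p + p' + (r + r')) • (L ^ 3 * R) + (2 + (p + p') * (r + r')) • (L ^ 2 * R ^ 2)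
      - (p + p' + (r + r')) • (L * R ^ 3) + R ^ 4) x4 = 0 := by
  rw [← sub_smul_prod_eq_quartic hLR hp hr]
  simp only [Module.End.mul_apply, h4, h3, h2, h1, map_smul, smul_zero]

/-- from the four commutation relations between `E` and `x₁, x₂, x₃, x₄`
(with `qi` the inverse of `q` in `k`), the degree-4 quantum Serre relation follows:
`E⁴x₄ − [4]_q E³x₄E + ([4]_q!/([2]_q![2]_q!)) E²x₄E² − [4]_q Ex₄E³ + x₄E⁴ = 0`. -/
theorem stmt19 {k A : Type*} [CommRing k] [Ring A] [Algebra k A]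
    (q qi : k) (hq : q * qi = 1)
    (E x1 x2 x3 x4 : A) (c1 c2 c3 : k)
    (h4 : x4 * E - qi ^ 3 • (E * x4) = c3 • x3)
    (h3 : E * x3 - q • (x3 * E) = c2 • x2)
    (h2 : E * x2 - qi • (x2 * E) = c1 • x1)
    (h1 : x1 * E = q ^ 3 • (E * x1)) :
    E ^ 4 * x4 - (q ^ 3 + q + qi + qi ^ 3) • (E ^ 3 * x4 * E)
      + (q ^ 4 + q ^ 2 + 2 + qi ^ 2 + qi ^ 4) • (E ^ 2 * x4 * E ^ 2)
      - (q ^ 3 + q + qi + qi ^ 3) • (E * x4 * E ^ 3) + x4 * E ^ 4 = 0 := by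
  have hq3 : q ^ 3 * qi ^ 3 = 1 := by rw [← mul_pow, hq, one_pow]
  have outer_coeff : q ^ 3 + q + qi + qi ^ 3 = q ^ 3 + qi ^ 3 + (q + qi) := by ring
  have middle_coeff :
      q ^ 4 + q ^ 2 + 2 + qi ^ 2 + qi ^ 4 = 2 + (q ^ 3 + qi ^ 3) * (q + qi) := by
    linear_combination (-q ^ 2 - qi ^ 2) * hq
  have h1' : x1 * E - q ^ 3 • (E * x1) = 0 := sub_eq_zero.mpr h1
  rw [outer_coeff, middle_coeff]
  simpa [LinearMap.pow_mulLeft, LinearMap.pow_mulRight, mul_assoc] using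
    stmt19_general hq3 hq (LinearMap.commute_mulLeft_right E E) h4 h3 h2 h1'
end
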